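/- With X, Y, F, G, H defined as in the Chen-Teo metric (X(x) = a0 + a1*x + a2*x^2 + a3*x^3 + a4*x^4, Y(y) analogous, F = X*y^2 - x^2*Y, G = X*(a0*ν^2 + 2*a3*ν*y^3 - a4*y^4 + 2*a4*ν*y^4) + (a0 - 2*a0*ν - 2*a1*ν*x - a4*ν^2*x^4)*Y, H = (ν*x+y)*((ν*x-y)*(a1 - a3*x*y) - 2*(1-ν)*(a0 - a4*x^2*y^2))), on the set where F ≠ 0, x ≠ y and X ≠ 0, one has ∂/∂y [ G*x/(F*X) + H*y/(F*(x-y)) ] = 2*(1-ν)*(ν*x+y)/(x-y)^3. -/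

import Mathlib

/-- The quartic metric function `X` (also giving `Y` when evaluated at `y`). -/
def Xq (a0 a1 a2 a3 a4 t : ℝ) : ℝ := a0 + a1*t + a2*t^2 + a3*t^3 + a4*t^4

/-- The Chen-Teo metric function `F`. -/
def Fq (a0 a1 a2 a3 a4 x y : ℝ) : ℝ :=
  Xq a0 a1 a2 a3 a4 x * y^2 - x^2 * Xq a0 a1 a2 a3 a4 y

/-- The Chen-Teo metric function `G`. -/
def Gq (ν a0 a1 a2 a3 a4 x y : ℝ) : ℝ :=
  Xq a0 a1 a2 a3 a4 x * (a0*ν^2 + 2*a3*ν*y^3 - a4*y^4 + 2*a4*ν*y^4)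
    + (a0 - 2*a0*ν - 2*a1*ν*x - a4*ν^2*x^4) * Xq a0 a1 a2 a3 a4 y

/-- The Chen-Teo metric function `H`. -/
def Hq (ν a0 a1 a3 a4 x y : ℝ) : ℝ :=
  (ν*x + y)*((ν*x - y)*(a1 - a3*x*y) - 2*(1 - ν)*(a0 - a4*x^2*y^2))

/-!
As a polynomial, `F = (y - x) K`. Modulo `F`, the product `G x` is `X` times a polynomial
`R`, with a quotient `Q` depending on `x` alone, so that `G x / (F X) = Q / X + R / F`. The
remaining term `R / F + H y / (F (x - y))` has numerator `R (x - y) + H y`, which is a multiple of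
`K`. Hence `F` cancels, and up to a function of `x` the differentiated expression is
`(1 - ν) (2 y - (1 - ν) x) / (x - y)²`.
-/

/-- The polynomial `K` with `F = (y - x) K`. -/
def cofactorF (a0 a1 a3 a4 x y : ℝ) : ℝ :=
  (x + y)*(a0 - a4*x^2*y^2) + x*y*(a1 - a3*x*y)

/-- The quotient `Q` in the decomposition `G x = F Q + X R`. -/
def quotientG (ν a1 a2 a3 a4 x : ℝ) : ℝ :=
  a1 + (1 - 2*ν)*(a2*x + a3*x^2) + (1 - ν)^2*a4*x^3

/-- The factor `R` in the decomposition `G x = F Q + X R`, written in terms of the combinations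
`a0 - a4 x² y²` and `a1 - a3 x y` that also make up `H` and `cofactorF`. -/
def remainderG (ν a0 a1 a3 a4 x y : ℝ) : ℝ :=
  (1 - ν)^2*x*(a0 - a4*x^2*y^2) + ((1 - 2*ν)*x - y)*y*(a1 - a3*x*y)

theorem Fq_eq_sub_mul_cofactorF (a0 a1 a2 a3 a4 x y : ℝ) :
    Fq a0 a1 a2 a3 a4 x y = (y - x) * cofactorF a0 a1 a3 a4 x y := by
  simp only [Fq, Xq, cofactorF]
  ring

theorem Gq_mul_eq_Fq_mul_add_Xq_mul (ν a0 a1 a2 a3 a4 x y : ℝ) :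
    Gq ν a0 a1 a2 a3 a4 x y * x =
      Fq a0 a1 a2 a3 a4 x y * quotientG ν a1 a2 a3 a4 x
        + Xq a0 a1 a2 a3 a4 x * remainderG ν a0 a1 a3 a4 x y := by
  simp only [Gq, Fq, Xq, quotientG, remainderG]
  ring

theorem remainderG_mul_sub_add_Hq_mul (ν a0 a1 a3 a4 x y : ℝ) :
    remainderG ν a0 a1 a3 a4 x y * (x - y) + Hq ν a0 a1 a3 a4 x y * y =
      (1 - ν)*((1 - ν)*x - 2*y) * cofactorF a0 a1 a3 a4 x y := by
  simp only [remainderG, Hq, cofactorF]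
  ring

theorem Gq_mul_div_Fq_mul_Xq {ν a0 a1 a2 a3 a4 x y : ℝ}
    (hF : Fq a0 a1 a2 a3 a4 x y ≠ 0) (hX : Xq a0 a1 a2 a3 a4 x ≠ 0) :
    Gq ν a0 a1 a2 a3 a4 x y * x / (Fq a0 a1 a2 a3 a4 x y * Xq a0 a1 a2 a3 a4 x) =
      quotientG ν a1 a2 a3 a4 x / Xq a0 a1 a2 a3 a4 x
        + remainderG ν a0 a1 a3 a4 x y / Fq a0 a1 a2 a3 a4 x y := by
  rw [Gq_mul_eq_Fq_mul_add_Xq_mul, add_div, mul_div_mul_left _ _ hF, mul_comm (Fq ..),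
    mul_div_mul_left _ _ hX]

theorem remainderG_div_Fq_add_Hq_mul_div {ν a0 a1 a2 a3 a4 x y : ℝ}
    (hF : Fq a0 a1 a2 a3 a4 x y ≠ 0) :
    remainderG ν a0 a1 a3 a4 x y / Fq a0 a1 a2 a3 a4 x y
        + Hq ν a0 a1 a3 a4 x y * y / (Fq a0 a1 a2 a3 a4 x y * (x - y)) =
      (1 - ν)*((2*y - (1 - ν)*x) / (x - y)^2) := by
  rw [Fq_eq_sub_mul_cofactorF] at hF ⊢
  obtain ⟨hyx, hK⟩ := mul_ne_zero_iff.mp hF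
  have hsub : x - y ≠ 0 := sub_ne_zero.mpr (sub_ne_zero.mp hyx).symm
  calc
    _ = (remainderG ν a0 a1 a3 a4 x y * (x - y) + Hq ν a0 a1 a3 a4 x y * y)
          / ((y - x) * cofactorF a0 a1 a3 a4 x y * (x - y)) := by
      rw [add_div, mul_div_mul_right _ _ hsub]
    _ = (1 - ν)*((1 - ν)*x - 2*y) / ((y - x) * (x - y)) := by
      rw [remainderG_mul_sub_add_Hq_mul, mul_right_comm (y - x), mul_div_mul_right _ _ hK]
    _ = (1 - ν)*((2*y - (1 - ν)*x) / (x - y)^2) := by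
      rw [← neg_sub x y]
      field_simp
      ring

theorem hasDerivAt_linear_div_sub_sq {𝕜 : Type*} [NontriviallyNormedField 𝕜] (a b : 𝕜) {x y : 𝕜}
    (hxy : x ≠ y) :
    HasDerivAt (fun s : 𝕜 => (a*s - b) / (x - s)^2) ((a*(x + y) - 2*b) / (x - y)^3) y := by
  have hsub : x - y ≠ 0 := sub_ne_zero.mpr hxy
  have hnum : HasDerivAt (fun s : 𝕜 => a*s - b) (a*1) y :=
    ((hasDerivAt_id' y).const_mul a).sub_const b
  have hden : HasDerivAt (fun s : 𝕜 => (x - s)^2) (2*(x - y)*(-1)) y := by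
    simpa using ((hasDerivAt_id' y).const_sub x).fun_pow 2
  refine (hnum.fun_div hden (pow_ne_zero 2 hsub)).congr_deriv ?_
  field_simp
  ring

theorem continuous_Fq_right (a0 a1 a2 a3 a4 x : ℝ) : Continuous (Fq a0 a1 a2 a3 a4 x) := by
  unfold Fq Xq
  fun_prop

theorem chenTeo_dy_identity (ν a0 a1 a2 a3 a4 x y : ℝ)
    (hF : Fq a0 a1 a2 a3 a4 x y ≠ 0) (hxy : x ≠ y)
    (hX : Xq a0 a1 a2 a3 a4 x ≠ 0) :
    HasDerivAt (fun s : ℝ =>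
        Gq ν a0 a1 a2 a3 a4 x s * x / (Fq a0 a1 a2 a3 a4 x s * Xq a0 a1 a2 a3 a4 x)
          + Hq ν a0 a1 a3 a4 x s * s / (Fq a0 a1 a2 a3 a4 x s * (x - s)))
      (2*(1 - ν)*(ν*x + y)/(x - y)^3) y := by
  have hcancel : ∀ᶠ s in nhds y,
      Gq ν a0 a1 a2 a3 a4 x s * x / (Fq a0 a1 a2 a3 a4 x s * Xq a0 a1 a2 a3 a4 x)
          + Hq ν a0 a1 a3 a4 x s * s / (Fq a0 a1 a2 a3 a4 x s * (x - s)) =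
        quotientG ν a1 a2 a3 a4 x / Xq a0 a1 a2 a3 a4 x
          + (1 - ν)*((2*s - (1 - ν)*x) / (x - s)^2) := by
    filter_upwards [(continuous_Fq_right a0 a1 a2 a3 a4 x).continuousAt.eventually_ne hF]
      with s hFs
    rw [Gq_mul_div_Fq_mul_Xq hFs hX, add_assoc, remainderG_div_Fq_add_Hq_mul_div hFs]
  have hderiv := ((hasDerivAt_linear_div_sub_sq 2 ((1 - ν)*x) hxy).const_mul (1 - ν)).const_add
    (quotientG ν a1 a2 a3 a4 x / Xq a0 a1 a2 a3 a4 x)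
  refine (hderiv.congr_of_eventuallyEq hcancel).congr_deriv ?_
  ring
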